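/- Let n, l ≥ 1, 1 ≤ p,q ≤ n, and r ≥ 1. Then in U(Q(n))^{⊗l}: ev^{⊗l}∘Δ_l(T_{q,p}^{(r)}) equals (−1)^r times the even component, and ev^{⊗l}∘Δ_l(T_{−q,p}^{(r)}) equals (−1)^r times the odd component, of the sum over all 1 ≤ p_1,…,p_{r−1} ≤ n and all 1 ≤ i_1 < i_2 < … < i_r ≤ l of the ordered products Π_{a=1}^{r} (x^{i_a}_{p_{a−1}, p_a} + (−1)^{r−a} ξ^{i_a}_{p_{a−1}, p_a}), where p_0 := p and p_r := q. -/

import Mathlib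

noncomputable section
open scoped Classical

/-! # The universal enveloping superalgebra `U(Q(n))` of the queer Lie superalgebra

`U(Q(n))` is presented by even generators `e i j` and odd generators `f i j`
(`1 ≤ i,j ≤ n`) subject to the relations
`[e i j, e k l] = δ_{jk} e i l - δ_{li} e k j`,
`[e i j, f k l] = δ_{jk} f i l - δ_{li} f k j`,
`f i j * f k l + f k l * f i j = δ_{jk} e i l + δ_{li} e k j`. -/

/-- Generators of `U(Q(n))`: `E i j` (even) and `F i j` (odd). -/
inductive QGen (n : ℕ) : Type
  | E : Fin n → Fin n → QGen n
  | F : Fin n → Fin n → QGen n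

/-- Kronecker delta. -/
def kd {n : ℕ} (i j : Fin n) : ℂ := if i = j then 1 else 0

/-- The defining relations of `U(Q(n))`. -/
inductive QRel (n : ℕ) : FreeAlgebra ℂ (QGen n) → FreeAlgebra ℂ (QGen n) → Prop
  | ee (i j k l : Fin n) : QRel n
      (FreeAlgebra.ι ℂ (QGen.E i j) * FreeAlgebra.ι ℂ (QGen.E k l) -
        FreeAlgebra.ι ℂ (QGen.E k l) * FreeAlgebra.ι ℂ (QGen.E i j))
      (kd j k • FreeAlgebra.ι ℂ (QGen.E i l) - kd l i • FreeAlgebra.ι ℂ (QGen.E k j))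
  | ef (i j k l : Fin n) : QRel n
      (FreeAlgebra.ι ℂ (QGen.E i j) * FreeAlgebra.ι ℂ (QGen.F k l) -
        FreeAlgebra.ι ℂ (QGen.F k l) * FreeAlgebra.ι ℂ (QGen.E i j))
      (kd j k • FreeAlgebra.ι ℂ (QGen.F i l) - kd l i • FreeAlgebra.ι ℂ (QGen.F k j))
  | ff (i j k l : Fin n) : QRel n
      (FreeAlgebra.ι ℂ (QGen.F i j) * FreeAlgebra.ι ℂ (QGen.F k l) +
        FreeAlgebra.ι ℂ (QGen.F k l) * FreeAlgebra.ι ℂ (QGen.F i j))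
      (kd j k • FreeAlgebra.ι ℂ (QGen.E i l) + kd l i • FreeAlgebra.ι ℂ (QGen.E k j))

/-- The universal enveloping superalgebra `U(Q(n))`. -/
abbrev UQ (n : ℕ) := RingQuot (QRel n)

/-- The generator `e i j` of `U(Q(n))`. -/
def Ue {n : ℕ} (i j : Fin n) : UQ n :=
  RingQuot.mkAlgHom ℂ (QRel n) (FreeAlgebra.ι ℂ (QGen.E i j))

/-- The generator `f i j` of `U(Q(n))`. -/
def Uf {n : ℕ} (i j : Fin n) : UQ n :=
  RingQuot.mkAlgHom ℂ (QRel n) (FreeAlgebra.ι ℂ (QGen.F i j))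

/-- Sergeev's elements `e_{ij}^{(m)}` and `f_{ij}^{(m)}` of `U(Q(n))`, defined recursively by
`e^{(0)} = δ`, `f^{(0)} = 0`,
`e_{ij}^{(m)} = Σ_k e_{ik} e_{kj}^{(m-1)} + (-1)^{m+1} Σ_k f_{ik} f_{kj}^{(m-1)}`,
`f_{ij}^{(m)} = Σ_k e_{ik} f_{kj}^{(m-1)} + (-1)^{m+1} Σ_k f_{ik} e_{kj}^{(m-1)}`. -/
def efU (n : ℕ) : ℕ → (Fin n → Fin n → UQ n) × (Fin n → Fin n → UQ n)
  | 0 => (fun i j => algebraMap ℂ (UQ n) (kd i j), fun _ _ => 0)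
  | m + 1 =>
      (fun i j => (∑ k, Ue i k * (efU n m).1 k j) +
        (-1 : ℂ) ^ m • ∑ k, Uf i k * (efU n m).2 k j,
       fun i j => (∑ k, Ue i k * (efU n m).2 k j) +
        (-1 : ℂ) ^ m • ∑ k, Uf i k * (efU n m).1 k j)

/-- `e_{ij}^{(m)}`. -/
def eU {n : ℕ} (m : ℕ) (i j : Fin n) : UQ n := (efU n m).1 i j
/-- `f_{ij}^{(m)}`. -/
def fU {n : ℕ} (m : ℕ) (i j : Fin n) : UQ n := (efU n m).2 i j

/-- For `l ∣ n`, the index `l(p-1)+i` of `{1,…,n}` (0-based: block `p`, position `i`). -/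
def bidx {n l : ℕ} (h : l ∣ n) (p : Fin (n / l)) (i : Fin l) : Fin n :=
  ⟨l * p.val + i.val, by
    have h1 : i.val < l := i.isLt
    have h2 : p.val + 1 ≤ n / l := p.isLt
    have h3 : l * (p.val + 1) ≤ l * (n / l) := Nat.mul_le_mul_left l h2
    have h4 : n / l * l ≤ n := Nat.div_mul_le_self n l
    have h5 : l * (p.val + 1) = l * p.val + l := Nat.mul_succ l p.val
    have h6 : l * (n / l) = n / l * l := Nat.mul_comm l (n / l)
    omega⟩
set_option linter.unusedVariables false

/-! # The character `χ`, the left ideal `I_χ` and the finite W-algebra data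

Here `l ∣ n` and `χ` corresponds to the even nilpotent element of `Q(n)` all of whose
Jordan blocks have size `l`.  The subalgebra `m = ⊕_{j<0} g_j` is spanned by the
elements `e_{l(p-1)+i+k, l(q-1)+i}` and `f_{l(p-1)+i+k, l(q-1)+i}` (`k ≥ 1`), and
`χ(e_{l(p-1)+i+1, l(q-1)+i}) = δ_{pq}` and `χ = 0` on the other basis elements. -/

/-- The set of elements `a - χ(a)` for `a` ranging over the standard basis of `m`;
(rows/columns written 0-based: `a` is the position of the row inside its block `p`,
`b` the position of the column inside its block `q`, with `b < a`). -/
def mSet (n l : ℕ) (h : l ∣ n) : Set (UQ n) :=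
  { x : UQ n | ∃ (p q : Fin (n / l)) (a b : Fin l), b.val < a.val ∧
      (x = Ue (bidx h p a) (bidx h q b) -
            algebraMap ℂ (UQ n) (if a.val = b.val + 1 ∧ p = q then 1 else 0) ∨
       x = Uf (bidx h p a) (bidx h q b)) }

/-- The left ideal `I_χ` of `U(Q(n))` generated by the `a - χ(a)`, `a ∈ m`. -/
def Ichi (n l : ℕ) (h : l ∣ n) : Submodule (UQ n) (UQ n) :=
  Submodule.span (UQ n) (mSet n l h)

/-- The quotient `U(Q(n))/I_χ` (as a `ℂ`-vector space). -/
abbrev Wq (n l : ℕ) (h : l ∣ n) := UQ n ⧸ (Ichi n l h).restrictScalars ℂ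

/-- The quotient map `π : U(Q(n)) → U(Q(n))/I_χ`. -/
def piq (n l : ℕ) (h : l ∣ n) : UQ n →ₗ[ℂ] Wq n l h :=
  ((Ichi n l h).restrictScalars ℂ).mkQ

/-- `y` super-commutes with `m` into `I_χ`:  `[a, y] ∈ I_χ` for every `a` in the standard
basis of `m`.  Here the super-commutator of the odd element `f` with (the possibly
non-homogeneous) `y` is `f * y - σ(y) * f`, where `σ` is the parity involution of
`U(Q(n))` (the algebra automorphism fixing the `e`'s and negating the `f`'s). -/
def Wcond {n l : ℕ} (h : l ∣ n) (σ : UQ n →ₐ[ℂ] UQ n) (y : UQ n) : Prop :=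
  ∀ (p q : Fin (n / l)) (a b : Fin l), b.val < a.val →
    (Ue (bidx h p a) (bidx h q b) * y - y * Ue (bidx h p a) (bidx h q b) ∈ Ichi n l h) ∧
    (Uf (bidx h p a) (bidx h q b) * y - σ y * Uf (bidx h p a) (bidx h q b) ∈ Ichi n l h)

/-- The finite W-algebra `W_χ = {π(y) | [a, y] ∈ I_χ for all a ∈ m}`, as a subset of
`U(Q(n))/I_χ`.  (Its product is `π(y₁)·π(y₂) = π(y₁y₂)`.) -/
def WchiSet (n l : ℕ) (h : l ∣ n) (σ : UQ n →ₐ[ℂ] UQ n) : Set (Wq n l h) :=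
  { w : Wq n l h | ∃ y : UQ n, Wcond h σ y ∧ piq n l h y = w }

/-- The standard basis elements of the parabolic subalgebra `p = ⊕_{j≥0} g_j`. -/
def pSet (n l : ℕ) (h : l ∣ n) : Set (UQ n) :=
  { x : UQ n | ∃ (p q : Fin (n / l)) (a b : Fin l), a.val ≤ b.val ∧
      (x = Ue (bidx h p a) (bidx h q b) ∨ x = Uf (bidx h p a) (bidx h q b)) }

/-- The standard basis elements of the nilradical `n = ⊕_{j>0} g_j` of `p`. -/
def nSet (n l : ℕ) (h : l ∣ n) : Set (UQ n) :=
  { x : UQ n | ∃ (p q : Fin (n / l)) (a b : Fin l), a.val < b.val ∧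
      (x = Ue (bidx h p a) (bidx h q b) ∨ x = Uf (bidx h p a) (bidx h q b)) }

/-- The kernel of the Harish-Chandra projection `ϑ : U(p) → U(g₀)`, realized inside
`U(Q(n))`: the `ℂ`-span of `U(p)·n`.  (By the PBW theorem, `U(g) = U(p) ⊕ I_χ` and
`U(p) = U(g₀) ⊕ U(p)n`, so for `y ∈ U(g)`, `ϑ(pr(y)) = t` iff
`y - t ∈ I_χ + U(p)n`.) -/
def Lspan (n l : ℕ) (h : l ∣ n) : Submodule ℂ (UQ n) :=
  Submodule.span ℂ
    { x : UQ n | ∃ u ∈ Algebra.adjoin ℂ (pSet n l h), ∃ g ∈ nSet n l h, x = u * g }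

/-- A descriptor of a generator of `U(p)`:  `(b, p, q, a, c)` is
`e_{l(p-1)+(a+1), l(q-1)+(c+1)}` if `b = false` and `f_{…}` if `b = true`
(required: `a ≤ c`). -/
def pgElem {n l : ℕ} (h : l ∣ n) :
    Bool × Fin (n / l) × Fin (n / l) × Fin l × Fin l → UQ n
  | (b, p, q, a, c) => (if b then Uf else Ue) (bidx h p a) (bidx h q c)

/-- Kazhdan degree `2k+2` of a `p`-generator of block offset `k = c - a`. -/
def pgDeg {l m : ℕ} (d : Bool × Fin m × Fin m × Fin l × Fin l) : ℕ :=
  2 * (d.2.2.2.2.val - d.2.2.2.1.val) + 2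

/-- Weight `2k` of a `p`-generator of block offset `k = c - a`. -/
def pgWt {l m : ℕ} (d : Bool × Fin m × Fin m × Fin l × Fin l) : ℕ :=
  2 * (d.2.2.2.2.val - d.2.2.2.1.val)

/-- Monomials in the generators of `U(p)` which are "lower" than bidegree
(Kazhdan degree `D`, weight `W`): either of Kazhdan degree `< D`, or of Kazhdan
degree `≤ D` and weight `< W`. -/
def LowSet (n l : ℕ) (h : l ∣ n) (D W : ℕ) : Set (UQ n) :=
  { x : UQ n | ∃ L : List (Bool × Fin (n / l) × Fin (n / l) × Fin l × Fin l),
      (∀ d ∈ L, d.2.2.2.1.val ≤ d.2.2.2.2.val) ∧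
      x = (L.map (pgElem h)).prod ∧
      ((L.map pgDeg).sum < D ∨ ((L.map pgDeg).sum ≤ D ∧ (L.map pgWt).sum < W)) }

/-- The span of the "lower" monomials. -/
def LowSpan (n l : ℕ) (h : l ∣ n) (D W : ℕ) : Submodule ℂ (UQ n) :=
  Submodule.span ℂ (LowSet n l h D W)

/-! # The super tensor power `U(Q(m))^{⊗l}`

Modeled as the superalgebra with generators `x^i_{pq} = 1^{⊗(l-i)} ⊗ e_{pq} ⊗ 1^{⊗(i-1)}`
(even) and `ξ^i_{pq} = 1^{⊗(l-i)} ⊗ f_{pq} ⊗ 1^{⊗(i-1)}` (odd), subject to the `U(Q(m))`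
relations in each tensor slot and to (super-)commutation between different slots. -/

/-- Generators of `U(Q(m))^{⊗l}`: `X i p q` is `x^i_{pq}` and `Xi i p q` is `ξ^i_{pq}`
(`i : Fin l` is the 0-based tensor slot, counted from the right). -/
inductive TGen (m l : ℕ) : Type
  | X : Fin l → Fin m → Fin m → TGen m l
  | Xi : Fin l → Fin m → Fin m → TGen m l

/-- Kronecker delta on slots. -/
def kdl {l : ℕ} (i j : Fin l) : ℂ := if i = j then 1 else 0

/-- The defining relations of `U(Q(m))^{⊗l}`. -/
inductive TRel (m l : ℕ) : FreeAlgebra ℂ (TGen m l) → FreeAlgebra ℂ (TGen m l) → Prop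
  | xx (i i' : Fin l) (p q r s : Fin m) : TRel m l
      (FreeAlgebra.ι ℂ (TGen.X i p q) * FreeAlgebra.ι ℂ (TGen.X i' r s) -
        FreeAlgebra.ι ℂ (TGen.X i' r s) * FreeAlgebra.ι ℂ (TGen.X i p q))
      ((kdl i i' * kd q r) • FreeAlgebra.ι ℂ (TGen.X i p s) -
        (kdl i i' * kd s p) • FreeAlgebra.ι ℂ (TGen.X i' r q))
  | xxi (i i' : Fin l) (p q r s : Fin m) : TRel m l
      (FreeAlgebra.ι ℂ (TGen.X i p q) * FreeAlgebra.ι ℂ (TGen.Xi i' r s) -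
        FreeAlgebra.ι ℂ (TGen.Xi i' r s) * FreeAlgebra.ι ℂ (TGen.X i p q))
      ((kdl i i' * kd q r) • FreeAlgebra.ι ℂ (TGen.Xi i p s) -
        (kdl i i' * kd s p) • FreeAlgebra.ι ℂ (TGen.Xi i' r q))
  | xixi (i i' : Fin l) (p q r s : Fin m) : TRel m l
      (FreeAlgebra.ι ℂ (TGen.Xi i p q) * FreeAlgebra.ι ℂ (TGen.Xi i' r s) +
        FreeAlgebra.ι ℂ (TGen.Xi i' r s) * FreeAlgebra.ι ℂ (TGen.Xi i p q))
      ((kdl i i' * kd q r) • FreeAlgebra.ι ℂ (TGen.X i p s) +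
        (kdl i i' * kd s p) • FreeAlgebra.ι ℂ (TGen.X i' r q))

/-- The superalgebra `U(Q(m))^{⊗l}`. -/
abbrev TQ (m l : ℕ) := RingQuot (TRel m l)

/-- `x^i_{pq} := 1^{⊗(l-i)} ⊗ e_{pq} ⊗ 1^{⊗(i-1)} ∈ U(Q(m))^{⊗l}`. -/
def xT {m l : ℕ} (i : Fin l) (p q : Fin m) : TQ m l :=
  RingQuot.mkAlgHom ℂ (TRel m l) (FreeAlgebra.ι ℂ (TGen.X i p q))

/-- `ξ^i_{pq} := 1^{⊗(l-i)} ⊗ f_{pq} ⊗ 1^{⊗(i-1)} ∈ U(Q(m))^{⊗l}`. -/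
def xiT {m l : ℕ} (i : Fin l) (p q : Fin m) : TQ m l :=
  RingQuot.mkAlgHom ℂ (TRel m l) (FreeAlgebra.ι ℂ (TGen.Xi i p q))

/-! # The super-Yangian `Y(Q(n))` -/

/-- The index set `{±1, …, ±n}`:  `(false, a)` is the positive index `a` (even),
`(true, a)` is the negative index `-a` (odd). -/
abbrev QIdx (n : ℕ) := Bool × Fin n

/-- Negation `i ↦ -i` on indices. -/
def qneg {n : ℕ} (i : QIdx n) : QIdx n := (!i.1, i.2)

/-- The parity `p(i)`: `0` for positive `i`, `1` for negative `i`. -/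
def qpar {n : ℕ} (i : QIdx n) : ℕ := if i.1 then 1 else 0

/-- Kronecker delta on `{±1, …, ±n}`. -/
def kdq {n : ℕ} (i j : QIdx n) : ℂ := if i = j then 1 else 0

/-- Generators of `Y(Q(n))`: `T m i j` encodes `T^{(m+1)}_{i,j}`. -/
inductive YGen (n : ℕ) : Type
  | T : ℕ → QIdx n → QIdx n → YGen n

/-- `T^{(m)}_{i,j}` in the free algebra, with `T^{(0)}_{i,j} = δ_{ij}`. -/
def Tf {n : ℕ} : ℕ → QIdx n → QIdx n → FreeAlgebra ℂ (YGen n)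
  | 0, i, j => algebraMap ℂ _ (kdq i j)
  | m + 1, i, j => FreeAlgebra.ι ℂ (YGen.T m i j)

/-- The super-commutator `[T^{(a)}_{i,j}, T^{(b)}_{k,l}]` in the free algebra. -/
def ybr {n : ℕ} (a : ℕ) (i j : QIdx n) (b : ℕ) (k l : QIdx n) :
    FreeAlgebra ℂ (YGen n) :=
  Tf a i j * Tf b k l -
    ((-1 : ℂ) ^ ((qpar i + qpar j) * (qpar k + qpar l))) • (Tf b k l * Tf a i j)

/-- The defining relations of the super-Yangian `Y(Q(n))`: for `M, R ≥ 1`,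
`(-1)^{p(i)p(k)+p(i)p(l)+p(k)p(l)} ([T^{(M+1)}_{ij}, T^{(R-1)}_{kl}] - [T^{(M-1)}_{ij}, T^{(R+1)}_{kl}])
 = T^{(M)}_{kj}T^{(R-1)}_{il} + T^{(M-1)}_{kj}T^{(R)}_{il} - T^{(R-1)}_{kj}T^{(M)}_{il}
   - T^{(R)}_{kj}T^{(M-1)}_{il}
   + (-1)^{p(k)+p(l)} (-T^{(M)}_{-k,j}T^{(R-1)}_{-i,l} + T^{(M-1)}_{-k,j}T^{(R)}_{-i,l}
       + T^{(R-1)}_{k,-j}T^{(M)}_{i,-l} - T^{(R)}_{k,-j}T^{(M-1)}_{i,-l})`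
(here `M = m+1`, `R = r+1`), together with `T^{(m)}_{-i,-j} = (-1)^m T^{(m)}_{i,j}`. -/
inductive YRel (n : ℕ) : FreeAlgebra ℂ (YGen n) → FreeAlgebra ℂ (YGen n) → Prop
  | quad (m r : ℕ) (i j k l : QIdx n) : YRel n
      (((-1 : ℂ) ^ (qpar i * qpar k + qpar i * qpar l + qpar k * qpar l)) •
        (ybr (m + 2) i j r k l - ybr m i j (r + 2) k l))
      (Tf (m + 1) k j * Tf r i l + Tf m k j * Tf (r + 1) i l -
        Tf r k j * Tf (m + 1) i l - Tf (r + 1) k j * Tf m i l +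
        ((-1 : ℂ) ^ (qpar k + qpar l)) •
          (-(Tf (m + 1) (qneg k) j * Tf r (qneg i) l) +
            Tf m (qneg k) j * Tf (r + 1) (qneg i) l +
            Tf r k (qneg j) * Tf (m + 1) i (qneg l) -
            Tf (r + 1) k (qneg j) * Tf m i (qneg l)))
  | par (m : ℕ) (i j : QIdx n) : YRel n
      (Tf (m + 1) (qneg i) (qneg j)) (((-1 : ℂ) ^ (m + 1)) • Tf (m + 1) i j)

/-- The super-Yangian `Y(Q(n))`. -/
abbrev YQ (n : ℕ) := RingQuot (YRel n)

/-- The generator `T^{(m)}_{i,j}` of `Y(Q(n))` (with `T^{(0)}_{i,j} = δ_{ij}`). -/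
def TY {n : ℕ} (m : ℕ) (i j : QIdx n) : YQ n :=
  RingQuot.mkAlgHom ℂ (YRel n) (Tf m i j)

/-! # Values of the homomorphisms `U`, `ev`, `ēv` on the generators of `Y(Q(n))`,
and the explicit sums appearing in the main theorems. -/

/-- The value of the homomorphism `U : Y(Q(n)) → U(Q(n))` on the generator
`T^{(r)}_{i,j}`:  `U(T^{(r)}_{i,j}) = (-1)^r e^{(r)}_{j,i}`,
`U(T^{(r)}_{-i,j}) = (-1)^r f^{(r)}_{j,i}` for `i, j > 0`, and the values on the other
generators are forced by `T^{(r)}_{-i,-j} = (-1)^r T^{(r)}_{i,j}`. -/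
def Uval {n : ℕ} (r : ℕ) (i j : QIdx n) : UQ n :=
  (if j.1 then (-1 : ℂ) ^ r else 1) •
    ((-1 : ℂ) ^ r • (if xor i.1 j.1 then fU r j.2 i.2 else eU r j.2 i.2))

/-- The value of the evaluation homomorphism `ev : Y(Q(n)) → U(Q(n))` on `T^{(r)}_{i,j}`:
`ev(T^{(1)}_{i,j}) = -e_{j,i}`, `ev(T^{(1)}_{-i,j}) = -f_{j,i}` for `i, j > 0`,
`ev(T^{(0)}_{i,j}) = δ_{ij}` and `ev(T^{(r)}_{i,j}) = 0` for `r > 1` (with the values on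
the remaining generators forced by `T^{(r)}_{-i,-j} = (-1)^r T^{(r)}_{i,j}`). -/
def evval {n : ℕ} (r : ℕ) (i j : QIdx n) : UQ n :=
  (if j.1 then (-1 : ℂ) ^ r else 1) •
    (match r with
      | 0 => if xor i.1 j.1 then 0 else algebraMap ℂ (UQ n) (kd i.2 j.2)
      | 1 => -(if xor i.1 j.1 then Uf j.2 i.2 else Ue j.2 i.2)
      | _ + 2 => 0)

/-- The value of `ēv = α ∘ ev : Y(Q(n)) → U(Q(n))` on `T^{(r)}_{i,j}`, where `α` is the
principal anti-automorphism of `U(Q(n))`:  `ēv(T^{(1)}_{i,j}) = e_{j,i}`,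
`ēv(T^{(1)}_{-i,j}) = f_{j,i}` for `i, j > 0`, `ēv(T^{(0)}_{i,j}) = δ_{ij}`,
`ēv(T^{(r)}_{i,j}) = 0` for `r > 1`. -/
def bevval {n : ℕ} (r : ℕ) (i j : QIdx n) : UQ n :=
  (if j.1 then (-1 : ℂ) ^ r else 1) •
    (match r with
      | 0 => if xor i.1 j.1 then 0 else algebraMap ℂ (UQ n) (kd i.2 j.2)
      | 1 => (if xor i.1 j.1 then Uf j.2 i.2 else Ue j.2 i.2)
      | _ + 2 => 0)

/-- The sum `Σ_{p_1,…,p_{r-1}} Σ_{l ≥ i_1 ≥ i_2 ≥ … ≥ i_r ≥ 1}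
Π_{a=1}^r (x^{i_a}_{p_{a-1},p_a} + (-1)^{r-a} ξ^{i_a}_{p_{a-1},p_a})`
(with `p_0 = p`, `p_r = q`), an element of `U(Q(m))^{⊗l}`. -/
def chainProdDec (m l : ℕ) (r : ℕ) (p q : Fin m) : TQ m l :=
  ∑ c : Fin (r + 1) → Fin m, ∑ iv : Fin r → Fin l,
    (if c 0 = p ∧ c (Fin.last r) = q ∧ (∀ a b : Fin r, a ≤ b → iv b ≤ iv a)
      then (1 : ℂ) else 0) •
      (List.ofFn fun a : Fin r =>
        xT (iv a) (c a.castSucc) (c a.succ) +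
          ((-1 : ℂ) ^ (r - 1 - a.val)) • xiT (iv a) (c a.castSucc) (c a.succ)).prod

/-- The sum `Σ_{p_1,…,p_{r-1}} Σ_{1 ≤ i_1 < i_2 < … < i_r ≤ l}
Π_{a=1}^r (x^{i_a}_{p_{a-1},p_a} + (-1)^{r-a} ξ^{i_a}_{p_{a-1},p_a})`
(with `p_0 = p`, `p_r = q`), an element of `U(Q(m))^{⊗l}`. -/
def chainProdInc (m l : ℕ) (r : ℕ) (p q : Fin m) : TQ m l :=
  ∑ c : Fin (r + 1) → Fin m, ∑ iv : Fin r → Fin l,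
    (if c 0 = p ∧ c (Fin.last r) = q ∧ (∀ a b : Fin r, a < b → iv a < iv b)
      then (1 : ℂ) else 0) •
      (List.ofFn fun a : Fin r =>
        xT (iv a) (c a.castSucc) (c a.succ) +
          ((-1 : ℂ) ^ (r - 1 - a.val)) • xiT (iv a) (c a.castSucc) (c a.succ)).prod

/-- The elements `z^{(r)}_{±q,p}` of `U(Q(m))^{⊗l}`:  the even (`sgn = false`,
giving `z^{(r)}_{q,p}`) resp. odd (`sgn = true`, giving `z^{(r)}_{-q,p}`) component of
`chainProdDec`, computed using the parity involution `σT` of `U(Q(m))^{⊗l}`;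
`z^{(0)}_{q,p} = δ_{qp}`, `z^{(0)}_{-q,p} = 0`. -/
def zDec {m l : ℕ} (σT : TQ m l →ₐ[ℂ] TQ m l) :
    ℕ → Bool → Fin m → Fin m → TQ m l
  | 0, sgn, q, p => if sgn then 0 else algebraMap ℂ (TQ m l) (kd q p)
  | r + 1, sgn, q, p =>
      (2⁻¹ : ℂ) • (chainProdDec m l (r + 1) p q +
        (if sgn then (-1 : ℂ) else 1) • σT (chainProdDec m l (r + 1) p q))

/-- The elements `z̃^{(r)}_{±q,p}` of `U(Q(m))^{⊗l}` (as `zDec`, with increasing chains). -/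
def zInc {m l : ℕ} (σT : TQ m l →ₐ[ℂ] TQ m l) :
    ℕ → Bool → Fin m → Fin m → TQ m l
  | 0, sgn, q, p => if sgn then 0 else algebraMap ℂ (TQ m l) (kd q p)
  | r + 1, sgn, q, p =>
      (2⁻¹ : ℂ) • (chainProdInc m l (r + 1) p q +
        (if sgn then (-1 : ℂ) else 1) • σT (chainProdInc m l (r + 1) p q))

/-- The explicit formula for the antipode value `S(T^{(r)}_{i,j})` (`r ≥ 1`):
`S(T^{(r)}_{i,j}) = Σ_{m=1}^{r} (-1)^m Σ_{i_1,…,i_{m-1}} Σ_{r_1+⋯+r_m=r, r_a>0}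
(-1)^{ν(i,i_1,…,i_{m-1},j)} T^{(r_1)}_{i,i_1} ⋯ T^{(r_m)}_{i_{m-1},j}` where
`ν(i_0,…,i_m) = Σ_{0≤k<s≤m-1} (p(i_k)+p(i_{k+1}))(p(i_s)+p(i_{s+1}))`. -/
def STval {n : ℕ} (r : ℕ) (i j : QIdx n) : YQ n :=
  ∑ m : Fin r,
    ((-1 : ℂ) ^ (m.val + 1)) •
      ∑ ch : Fin (m.val + 2) → QIdx n, ∑ c : Fin (m.val + 1) → Fin (r + 1),
        (if ch 0 = i ∧ ch (Fin.last (m.val + 1)) = j ∧ (∀ a, 1 ≤ (c a).val) ∧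
              (∑ a, (c a).val) = r
          then ((-1 : ℂ) ^ (∑ a : Fin (m.val + 1), ∑ b : Fin (m.val + 1),
              if a < b then
                (qpar (ch a.castSucc) + qpar (ch a.succ)) *
                  (qpar (ch b.castSucc) + qpar (ch b.succ))
              else 0))
          else 0) •
        (List.ofFn fun a : Fin (m.val + 1) =>
          TY (c a).val (ch a.castSucc) (ch a.succ)).prod

lemma tq_neg_smul {m l : ℕ} (c : ℂ) (y : TQ m l) : (-c) • y = -(c • y) :=
  neg_smul c y

lemma tq_neg_one_smul {m l : ℕ} (y : TQ m l) : (-1 : ℂ) • y = -y :=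
  neg_one_smul ℂ y

lemma tq_smul_sub {m l : ℕ} (c : ℂ) (y z : TQ m l) : c • (y - z) = c • y - c • z :=
  smul_sub c y z

/-- Homogeneous elements (of parity `b`) of `TQ m l`. -/
inductive HPar (m l : ℕ) : Bool → TQ m l → Prop
  | x (i : Fin l) (p q : Fin m) : HPar m l false (xT i p q)
  | xi (i : Fin l) (p q : Fin m) : HPar m l true (xiT i p q)
  | one : HPar m l false 1
  | zero (b : Bool) : HPar m l b 0
  | add (b : Bool) (y z : TQ m l) : HPar m l b y → HPar m l b z → HPar m l b (y + z)
  | smul (b : Bool) (c : ℂ) (y : TQ m l) : HPar m l b y → HPar m l b (c • y)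
  | mul (a b : Bool) (y z : TQ m l) : HPar m l a y → HPar m l b z →
      HPar m l (xor a b) (y * z)

lemma HPar.sum {m l : ℕ} {ι : Type*} (s : Finset ι) (b : Bool) (f : ι → TQ m l)
    (h : ∀ i ∈ s, HPar m l b (f i)) : HPar m l b (∑ i ∈ s, f i) := by
  induction s using Finset.induction_on with
  | empty => simpa using HPar.zero b
  | insert a s ha ih =>
    rw [Finset.sum_insert ha]
    exact HPar.add _ _ _ (h a (by simp)) (ih fun i hi => h i (by simp [hi]))

lemma HPar.sigma {m l : ℕ} (σT : TQ m l →ₐ[ℂ] TQ m l)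
    (hx : ∀ (a : Fin l) (i j : Fin m), σT (xT a i j) = xT a i j)
    (hxi : ∀ (a : Fin l) (i j : Fin m), σT (xiT a i j) = -xiT a i j)
    {b : Bool} {y : TQ m l} (h : HPar m l b y) :
    σT y = (if b then (-1 : ℂ) else 1) • y := by
  induction h with
  | x i p q => simp [hx]
  | xi i p q => simp [hxi, tq_neg_one_smul]
  | one => simp
  | zero b => simp
  | add b y z _ _ h1 h2 => rw [map_add, h1, h2, smul_add]
  | smul b c y _ h1 => rw [map_smul, h1, smul_comm]
  | mul a b y z _ _ h1 h2 =>
    rw [map_mul, h1, h2, smul_mul_smul_comm]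
    cases a <;> cases b <;> simp

lemma HPar.map {m k l : ℕ} (φ : TQ m k →ₐ[ℂ] TQ m l) (g : Fin k → Fin l)
    (hx : ∀ (a : Fin k) (i j : Fin m), φ (xT a i j) = xT (g a) i j)
    (hxi : ∀ (a : Fin k) (i j : Fin m), φ (xiT a i j) = xiT (g a) i j)
    {b : Bool} {y : TQ m k} (h : HPar m k b y) : HPar m l b (φ y) := by
  induction h with
  | x i p q => rw [hx]; exact HPar.x _ _ _
  | xi i p q => rw [hxi]; exact HPar.xi _ _ _
  | one => rw [map_one]; exact HPar.one
  | zero b => rw [map_zero]; exact HPar.zero b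
  | add b y z _ _ h1 h2 => rw [map_add]; exact HPar.add _ _ _ h1 h2
  | smul b c y _ h1 => rw [map_smul]; exact HPar.smul _ _ _ h1
  | mul a b y z _ _ h1 h2 => rw [map_mul]; exact HPar.mul _ _ _ _ h1 h2

lemma xx_comm {m l : ℕ} (i i' : Fin l) (h : i ≠ i') (p q r s : Fin m) :
    (xT i p q : TQ m l) * xT i' r s = xT i' r s * xT i p q := by
  have := RingQuot.mkAlgHom_rel ℂ (TRel.xx i i' p q r s)
  simp only [kdl, h, if_false, zero_mul, zero_smul, map_sub, map_mul, map_zero, sub_self] at this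
  exact sub_eq_zero.1 this

lemma xxi_comm {m l : ℕ} (i i' : Fin l) (h : i ≠ i') (p q r s : Fin m) :
    (xT i p q : TQ m l) * xiT i' r s = xiT i' r s * xT i p q := by
  have := RingQuot.mkAlgHom_rel ℂ (TRel.xxi i i' p q r s)
  simp only [kdl, h, if_false, zero_mul, zero_smul, map_sub, map_mul, map_zero, sub_self] at this
  exact sub_eq_zero.1 this

lemma xixi_comm {m l : ℕ} (i i' : Fin l) (h : i ≠ i') (p q r s : Fin m) :
    (xiT i p q : TQ m l) * xiT i' r s = - (xiT i' r s * xiT i p q) := by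
  have := RingQuot.mkAlgHom_rel ℂ (TRel.xixi i i' p q r s)
  simp only [kdl, h, if_false, zero_mul, zero_smul, map_add, map_mul, map_zero, add_zero] at this
  exact eq_neg_of_add_eq_zero_left this

lemma HPar.xcomm {m k : ℕ} (φ : TQ m k →ₐ[ℂ] TQ m (k + 1))
    (hx : ∀ (a : Fin k) (i j : Fin m), φ (xT a i j) = xT a.succ i j)
    (hxi : ∀ (a : Fin k) (i j : Fin m), φ (xiT a i j) = xiT a.succ i j)
    {b : Bool} {y : TQ m k} (h : HPar m k b y) (p q : Fin m) :
    φ y * xT 0 p q = xT 0 p q * φ y := by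
  induction h with
  | x i p q => rw [hx, xx_comm _ _ (Fin.succ_ne_zero i)]
  | xi i p q => rw [hxi, xxi_comm _ _ (Fin.succ_ne_zero i).symm]
  | one => simp
  | zero b => simp
  | add b y z _ _ h1 h2 => rw [map_add, add_mul, mul_add, h1, h2]
  | smul b c y _ h1 => rw [map_smul, smul_mul_assoc, mul_smul_comm, h1]
  | mul a b y z _ _ h1 h2 => rw [map_mul, mul_assoc, h2, ← mul_assoc, h1, mul_assoc]

lemma HPar.xicomm {m k : ℕ} (φ : TQ m k →ₐ[ℂ] TQ m (k + 1))
    (hx : ∀ (a : Fin k) (i j : Fin m), φ (xT a i j) = xT a.succ i j)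
    (hxi : ∀ (a : Fin k) (i j : Fin m), φ (xiT a i j) = xiT a.succ i j)
    {b : Bool} {y : TQ m k} (h : HPar m k b y) (p q : Fin m) :
    φ y * xiT 0 p q = (if b then (-1 : ℂ) else 1) • (xiT 0 p q * φ y) := by
  induction h with
  | x i p q => simp [hx, xxi_comm _ _ (Fin.succ_ne_zero i)]
  | xi i p q => simp [hxi, xixi_comm _ _ (Fin.succ_ne_zero i), tq_neg_one_smul]
  | one => simp
  | zero b => simp
  | add b y z _ _ h1 h2 => rw [map_add, add_mul, mul_add, h1, h2, smul_add]
  | smul b c y _ h1 => rw [map_smul, smul_mul_assoc, mul_smul_comm, h1, smul_comm]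
  | mul a b y z _ _ h1 h2 =>
    rw [map_mul, mul_assoc, h2, mul_smul_comm, ← mul_assoc, h1, smul_mul_assoc, smul_smul,
      mul_assoc]
    cases a <;> cases b <;> simp [tq_neg_one_smul]

/-- The inner sum of `chainProdInc` for a fixed sequence of slots. -/
def chW (m l r : ℕ) (iv : Fin r → Fin l) (p q : Fin m) : TQ m l :=
  ∑ c : Fin (r + 1) → Fin m, (if c 0 = p ∧ c (Fin.last r) = q then (1 : ℂ) else 0) •
      (List.ofFn fun a : Fin r =>
        xT (iv a) (c a.castSucc) (c a.succ) +
          ((-1 : ℂ) ^ (r - 1 - a.val)) • xiT (iv a) (c a.castSucc) (c a.succ)).prod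

lemma chain_eq (m l r : ℕ) (p q : Fin m) : chainProdInc m l r p q =
    ∑ iv : Fin r → Fin l, if StrictMono iv then chW m l r iv p q else 0 := by
  unfold chainProdInc chW
  rw [Finset.sum_comm]
  refine Finset.sum_congr rfl fun iv _ => ?_
  have e : (∀ a b : Fin r, a < b → iv a < iv b) ↔ StrictMono iv := Iff.rfl
  by_cases h : StrictMono iv
  · rw [if_pos h]
    refine Finset.sum_congr rfl fun c _ => ?_
    simp only [e, h, and_true]
  · rw [if_neg h]
    refine Finset.sum_eq_zero fun c _ => ?_
    simp only [e, h, and_false, if_false, zero_smul]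

lemma sum_strictMono {M : Type*} [AddCommMonoid M] (r k : ℕ)
    (f : (Fin (r + 1) → Fin (k + 1)) → M) :
    (∑ iv, if StrictMono iv then f iv else 0) =
      (∑ iv : Fin (r + 1) → Fin k, if StrictMono iv then f (Fin.succ ∘ iv) else 0) +
      ∑ iv : Fin r → Fin k,
        if StrictMono iv then f (Fin.cons 0 (Fin.succ ∘ iv)) else 0 := by
  trans ∑ x : (Fin (r + 1) → Fin k) ⊕ (Fin r → Fin k), Sum.elim
    (fun iv : Fin (r + 1) → Fin k => if StrictMono iv then f (Fin.succ ∘ iv) else 0)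
    (fun iv : Fin r → Fin k =>
        if StrictMono iv then f (Fin.cons 0 (Fin.succ ∘ iv)) else 0) x
  swap
  · rw [Fintype.sum_sum_type]
    simp only [Sum.elim_inl, Sum.elim_inr]
  symm
  refine Fintype.sum_of_injective
    (Sum.elim (fun iv => Fin.succ ∘ iv) (fun iv => Fin.cons 0 (Fin.succ ∘ iv))) ?_ _ _ ?_ ?_
  · rintro (a | a) (b | b) h
    · have : a = b := by
        funext i; exact Fin.succ_injective _ (congrFun h i)
      rw [this]
    · have := congrFun h 0
      simp at this
    · have := congrFun h 0
      simp at this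
      exact absurd this.symm (Fin.succ_ne_zero _)
    · have : a = b := by
        funext i
        have := congrFun h i.succ
        simpa using this
      rw [this]
  · intro iv hiv
    rw [if_neg]
    intro hm
    apply hiv
    have hpos : ∀ i : Fin r, iv i.succ ≠ 0 := fun i =>
      ((Fin.zero_le _).trans_lt (hm (Fin.succ_pos i))).ne'
    by_cases h0 : iv 0 = 0
    · refine ⟨Sum.inr fun i => (iv i.succ).pred (hpos i), ?_⟩
      funext i
      refine Fin.cases ?_ (fun i => ?_) i <;> simp [h0]
    · refine ⟨Sum.inl fun i => (iv i).pred (Fin.cases h0 hpos i), ?_⟩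
      funext i
      simp
  · rintro (iv | iv)
    · have : StrictMono (Fin.succ ∘ iv) ↔ StrictMono iv :=
        ⟨fun h a b hab => Fin.succ_lt_succ_iff.1 (h hab),
          fun h a b hab => Fin.succ_lt_succ_iff.2 (h hab)⟩
      simp only [Sum.elim_inl, this]
    · have : StrictMono (Fin.cons 0 (Fin.succ ∘ iv) : Fin (r + 1) → Fin (k + 1)) ↔
          StrictMono iv := by
        constructor
        · intro h a b hab
          have := h (Fin.succ_lt_succ_iff.2 hab)
          simpa using this
        · intro h a b
          refine Fin.cases ?_ (fun a => ?_) a <;> refine Fin.cases ?_ (fun b => ?_) b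
          · simp
          · simp
          · simp
          · intro hab
            simpa using h (Fin.succ_lt_succ_iff.1 hab)
      simp only [Sum.elim_inr, this]

lemma chW_succ {m k : ℕ} (φ : TQ m k →ₐ[ℂ] TQ m (k + 1))
    (hx : ∀ (a : Fin k) (i j : Fin m), φ (xT a i j) = xT a.succ i j)
    (hxi : ∀ (a : Fin k) (i j : Fin m), φ (xiT a i j) = xiT a.succ i j)
    (r : ℕ) (iv : Fin r → Fin k) (p q : Fin m) :
    chW m (k + 1) r (Fin.succ ∘ iv) p q = φ (chW m k r iv p q) := by
  unfold chW
  simp only [map_sum, map_smul, map_list_prod, List.map_ofFn, Function.comp_def, map_add, hx, hxi]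

lemma chW_cons {m k : ℕ} (φ : TQ m k →ₐ[ℂ] TQ m (k + 1))
    (hx : ∀ (a : Fin k) (i j : Fin m), φ (xT a i j) = xT a.succ i j)
    (hxi : ∀ (a : Fin k) (i j : Fin m), φ (xiT a i j) = xiT a.succ i j)
    (r : ℕ) (iv : Fin r → Fin k) (p q : Fin m) :
    chW m (k + 1) (r + 1) (Fin.cons 0 (Fin.succ ∘ iv)) p q =
      ∑ t : Fin m, (xT 0 p t + (-1 : ℂ) ^ r • xiT 0 p t) * φ (chW m k r iv t q) := by
  have h1 : chW m (k + 1) (r + 1) (Fin.cons 0 (Fin.succ ∘ iv)) p q =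
      ∑ c : Fin (r + 1) → Fin m, (if c (Fin.last r) = q then (1 : ℂ) else 0) •
        ((xT 0 p (c 0) + (-1 : ℂ) ^ r • xiT 0 p (c 0)) *
        (List.ofFn fun a : Fin r =>
        xT (iv a).succ (c a.castSucc) (c a.succ) +
          ((-1 : ℂ) ^ (r - 1 - a.val)) • xiT (iv a).succ (c a.castSucc) (c a.succ)).prod) := by
    unfold chW
    rw [← (Fin.consEquiv fun _ : Fin (r + 2) => Fin m).sum_comp, Fintype.sum_prod_type,
      Finset.sum_eq_single p]
    · refine Finset.sum_congr rfl fun c _ => ?_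
      have hs : ∀ a : Fin r, r + 1 - 1 - (a.succ : Fin (r+1)).val = r - 1 - a.val := by
        intro a; simp only [Fin.val_succ]; omega
      simp only [List.ofFn_succ, List.prod_cons, Fin.consEquiv_apply, Fin.cons_zero,
        Fin.cons_succ, Fin.castSucc_zero, ← Fin.succ_last, hs, ← Fin.succ_castSucc, true_and]
      simp
    · intro t _ ht
      refine Finset.sum_eq_zero fun c _ => ?_
      simp [ht]
    · simp
  rw [h1]
  simp only [← chW_succ φ hx hxi]
  simp only [chW, Finset.mul_sum]
  rw [Finset.sum_comm]
  refine Finset.sum_congr rfl fun c _ => ?_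
  rw [Finset.sum_eq_single (c 0)]
  · simp
  · intro t _ ht
    simp [ht.symm]
  · simp

lemma chain_zero (m l : ℕ) (p q : Fin m) :
    chainProdInc m l 0 p q = algebraMap ℂ _ (kd p q) := by
  rw [chain_eq]
  have : ∀ iv : Fin 0 → Fin l, StrictMono iv := fun iv a => a.elim0
  simp only [this, if_true]
  rw [Fintype.sum_unique]
  unfold chW
  rw [← (Equiv.funUnique (Fin 1) (Fin m)).symm.sum_comp, Finset.sum_eq_single p]
  · simp [kd, Algebra.algebraMap_eq_smul_one]
  · intro t _ ht
    simp [ht]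
  · simp

lemma chain_slots_zero (m r : ℕ) (p q : Fin m) :
    chainProdInc m 0 (r + 1) p q = 0 := by
  rw [chain_eq]
  exact Finset.sum_eq_zero fun iv _ => (iv 0).elim0

lemma chain_succ {m k : ℕ} (φ : TQ m k →ₐ[ℂ] TQ m (k + 1))
    (hx : ∀ (a : Fin k) (i j : Fin m), φ (xT a i j) = xT a.succ i j)
    (hxi : ∀ (a : Fin k) (i j : Fin m), φ (xiT a i j) = xiT a.succ i j)
    (r : ℕ) (p q : Fin m) :
    chainProdInc m (k + 1) (r + 1) p q = φ (chainProdInc m k (r + 1) p q) +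
      ∑ t : Fin m, (xT 0 p t + (-1 : ℂ) ^ r • xiT 0 p t) * φ (chainProdInc m k r t q) := by
  simp only [chain_eq]
  rw [sum_strictMono]
  congr 1
  · rw [map_sum]
    refine Finset.sum_congr rfl fun iv _ => ?_
    split_ifs
    · exact chW_succ φ hx hxi _ _ _ _
    · simp
  · simp only [map_sum, Finset.mul_sum]
    rw [Finset.sum_comm]
    refine Finset.sum_congr rfl fun iv _ => ?_
    split_ifs
    · exact chW_cons φ hx hxi _ _ _ _
    · simp

lemma TY_zero {n : ℕ} (i j : QIdx n) : TY 0 i j = algebraMap ℂ (YQ n) (kdq i j) := by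
  simp [TY, Tf]

lemma TY_neg {n : ℕ} (s : ℕ) (b : Bool) (i j : Fin n) :
    TY s (b, i) (true, j) = (-1 : ℂ) ^ s • TY s (!b, i) (false, j) := by
  cases s with
  | zero => cases b <;> simp [TY_zero, kdq]
  | succ s =>
    have := RingQuot.mkAlgHom_rel ℂ (YRel.par s (!b, i) (false, j))
    rw [map_smul] at this
    simpa [qneg, TY] using this

lemma evval_zero {n : ℕ} (i j : QIdx n) : evval 0 i j = algebraMap ℂ (UQ n) (kdq i j) := by
  rcases i with ⟨b, i⟩
  rcases j with ⟨c, j⟩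
  cases b <;> cases c <;> simp [evval, kdq, kd]

lemma G_rec {n k : ℕ}
    (emb : UQ n →ₐ[ℂ] TQ n (k + 1))
    (hembx : ∀ i j : Fin n, emb (Ue i j) = xT 0 i j)
    (hembxi : ∀ i j : Fin n, emb (Uf i j) = xiT 0 i j)
    (φ : TQ n k →ₐ[ℂ] TQ n (k + 1))
    (hx : ∀ (a : Fin k) (i j : Fin n), φ (xT a i j) = xT a.succ i j)
    (hxi : ∀ (a : Fin k) (i j : Fin n), φ (xiT a i j) = xiT a.succ i j)
    (G : YQ n →ₐ[ℂ] TQ n k) (G' : YQ n →ₐ[ℂ] TQ n (k + 1))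
    (hG : ∀ (s : ℕ) (i j : QIdx n),
      G' (TY s i j) =
        ∑ t : Fin (s + 1), ∑ kk : QIdx n,
          ((-1 : ℂ) ^ ((qpar i + qpar kk) * (qpar j + qpar kk))) •
            (φ (G (TY t.val i kk)) * emb (evval (s - t.val) kk j)))
    (hp : ∀ s b i j, HPar n k b (G (TY s (b, i) (false, j))))
    (s : ℕ) (b : Bool) (i j : Fin n) :
    G' (TY (s + 1) (b, i) (false, j)) = φ (G (TY (s + 1) (b, i) (false, j))) -
      ∑ t : Fin n, (xT 0 j t * φ (G (TY s (b, i) (false, t))) +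
        (-1 : ℂ) ^ s • (xiT 0 j t * φ (G (TY s (!b, i) (false, t))))) := by
  rw [hG, Fin.sum_univ_castSucc, Fin.sum_univ_castSucc, Finset.sum_eq_zero, zero_add,
    sub_eq_add_neg]
  · refine (add_comm _ _).trans ?_
    congr 1
    · rw [Finset.sum_eq_single (false, j)]
      · simp [evval_zero, kdq, qpar]
      · intro kk _ hk
        simp [evval_zero, kdq, hk]
      · simp
    · rw [Fintype.sum_prod_type, Fintype.sum_bool, ← Finset.sum_neg_distrib,
        ← Finset.sum_add_distrib]
      refine Finset.sum_congr rfl fun t _ => ?_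
      have e1 := (hp s b i t).xcomm φ hx hxi j t
      have e2 := (hp s (!b) i t).xicomm φ hx hxi j t
      have e3 : s + 1 - s = 1 := by omega
      have v1 : emb (evval 1 (false, t) (false, j)) = -xT 0 j t := by
        simp [evval, hembx]
      have v2 : emb (evval 1 (true, t) (false, j)) = -xiT 0 j t := by
        simp [evval, hembxi]
      simp only [Fin.val_castSucc, Fin.val_last, TY_neg s b i t, map_smul, e3, v1, v2]
      simp only [← tq_neg_one_smul]
      rw [mul_smul_comm, mul_smul_comm, e1, smul_mul_assoc, e2]
      generalize xT 0 j t * φ (G (TY s (b, i) (false, t))) = A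
      generalize xiT 0 j t * φ (G (TY s (!b, i) (false, t))) = B
      generalize (-1 : ℂ) ^ s = c
      simp only [smul_smul, smul_add]
      refine (add_comm _ _).trans ?_
      congr 2
      · cases b <;> simp [qpar]
      · cases b <;> simp [qpar]
  · intro t _
    refine Finset.sum_eq_zero fun kk _ => ?_
    have : ∃ u, s + 1 - (t.castSucc.castSucc : Fin (s+2)).val = u + 2 := 
      ⟨s - 1 - t.val, by simp; omega⟩
    obtain ⟨u, hu⟩ := this
    rw [hu]
    simp [evval]

lemma main_claim (n : ℕ)
    (emb : ∀ k : ℕ, Fin k → (UQ n →ₐ[ℂ] TQ n k))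
    (hembx : ∀ (k : ℕ) (a : Fin k) (i j : Fin n), emb k a (Ue i j) = xT a i j)
    (hembxi : ∀ (k : ℕ) (a : Fin k) (i j : Fin n), emb k a (Uf i j) = xiT a i j)
    (ishUp : ∀ k : ℕ, TQ n k →ₐ[ℂ] TQ n (k + 1))
    (hishx : ∀ (k : ℕ) (a : Fin k) (i j : Fin n), ishUp k (xT a i j) = xT a.succ i j)
    (hishxi : ∀ (k : ℕ) (a : Fin k) (i j : Fin n), ishUp k (xiT a i j) = xiT a.succ i j)
    (G : ∀ k : ℕ, YQ n →ₐ[ℂ] TQ n k)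
    (hG1 : ∀ (s : ℕ) (i j : QIdx n), G 1 (TY s i j) = emb 1 0 (evval s i j))
    (hGstep : ∀ (k : ℕ), 1 ≤ k → ∀ (s : ℕ) (i j : QIdx n),
      G (k + 1) (TY s i j) =
        ∑ t : Fin (s + 1), ∑ kk : QIdx n,
          ((-1 : ℂ) ^ ((qpar i + qpar kk) * (qpar j + qpar kk))) •
            (ishUp k (G k (TY t.val i kk)) * emb (k + 1) 0 (evval (s - t.val) kk j)))
    (k : ℕ) (hk : 1 ≤ k) :
    (∀ s b i j, HPar n k b (G k (TY s (b, i) (false, j)))) ∧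
    ∀ s q p, G k (TY s (false, q) (false, p)) + G k (TY s (true, q) (false, p)) =
      (-1 : ℂ) ^ s • chainProdInc n k s p q := by
  have hzero : ∀ k b i j, HPar n k b (G k (TY 0 (b, i) (false, j))) := by
    intro k b i j
    rw [TY_zero, AlgHom.commutes]
    cases b
    · rw [Algebra.algebraMap_eq_smul_one]
      exact HPar.smul _ _ _ HPar.one
    · simpa [kdq] using HPar.zero true
  have hzero' : ∀ k q p, G k (TY 0 (false, q) (false, p)) + G k (TY 0 (true, q) (false, p)) =
      (-1 : ℂ) ^ 0 • chainProdInc n k 0 p q := by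
    intro k q p
    rw [TY_zero, TY_zero, AlgHom.commutes, AlgHom.commutes, chain_zero]
    simp [kdq, kd, eq_comm]
  induction k, hk using Nat.le_induction with
  | base =>
    refine ⟨fun s b i j => ?_, fun s q p => ?_⟩
    · rcases s with _ | _ | s
      · exact hzero _ _ _ _
      · rw [hG1]
        cases b
        · have := HPar.smul _ (-1) _ (HPar.x (0 : Fin 1) j i)
          simpa [evval, hembx, tq_neg_one_smul] using this
        · have := HPar.smul _ (-1) _ (HPar.xi (0 : Fin 1) j i)
          simpa [evval, hembxi, tq_neg_one_smul] using this
      · rw [hG1]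
        simpa [evval] using HPar.zero b
    · rcases s with _ | s
      · exact hzero' _ _ _
      · rw [chain_succ (ishUp 0) (hishx 0) (hishxi 0), chain_slots_zero, hG1, hG1]
        rcases s with _ | s
        · rw [Finset.sum_eq_single q]
          · simp [chain_zero, evval, hembx, hembxi, kd]
          · intro t _ ht
            simp [chain_zero, kd, ht]
          · simp
        · simp [chain_slots_zero, evval]
  | succ k hk ih =>
    obtain ⟨ih1, ih2⟩ := ih
    have hrec := G_rec (emb (k + 1) 0) (hembx (k + 1) 0) (hembxi (k + 1) 0) (ishUp k)
      (hishx k) (hishxi k) (G k) (G (k + 1)) (hGstep k hk) ih1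
    have hP : ∀ s b i j, HPar n (k + 1) b (ishUp k (G k (TY s (b, i) (false, j)))) :=
      fun s b i j => (ih1 s b i j).map _ _ (hishx k) (hishxi k)
    refine ⟨fun s b i j => ?_, fun s q p => ?_⟩
    · rcases s with _ | s
      · exact hzero _ _ _ _
      · rw [hrec, sub_eq_add_neg, ← tq_neg_one_smul]
        refine HPar.add _ _ _ (hP _ _ _ _) (HPar.smul _ _ _ (HPar.sum _ _ _ fun t _ => ?_))
        refine HPar.add _ _ _ ?_ (HPar.smul _ _ _ ?_)
        · simpa using HPar.mul _ _ _ _ (HPar.x 0 j t) (hP s b i t)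
        · simpa using HPar.mul _ _ _ _ (HPar.xi 0 j t) (hP s (!b) i t)
    · rcases s with _ | s
      · exact hzero' _ _ _
      · rw [hrec, hrec, chain_succ (ishUp k) (hishx k) (hishxi k), smul_add, ← map_smul, ← ih2,
          map_add, sub_add_sub_comm, sub_eq_add_neg, ← Finset.sum_add_distrib, Finset.smul_sum,
          ← Finset.sum_neg_distrib]
        congr 1
        refine Finset.sum_congr rfl fun t _ => ?_
        rw [pow_succ, mul_neg_one, tq_neg_smul, ← mul_smul_comm ((-1 : ℂ) ^ s) (xT 0 p t + _),
          ← map_smul, ← ih2]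
        simp only [map_add, add_mul, mul_add, smul_mul_assoc, Bool.not_false, Bool.not_true]
        abel

/-- Let `n, l ≥ 1`, `1 ≤ p,q ≤ n` and `r ≥ 1`.  Then in
`U(Q(n))^{⊗l}`, `ev^{⊗l}∘Δ_l(T^{(r)}_{q,p})` equals `(-1)^r` times the even component,
and `ev^{⊗l}∘Δ_l(T^{(r)}_{-q,p})` equals `(-1)^r` times the odd component, of
`Σ_{p_1,…,p_{r-1}} Σ_{1 ≤ i_1 < … < i_r ≤ l} Π_{a=1}^r
(x^{i_a}_{p_{a-1},p_a} + (-1)^{r-a} ξ^{i_a}_{p_{a-1},p_a})` (`p_0 = p`, `p_r = q`).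
Here `G k = ev^{⊗k}∘Δ_k : Y(Q(n)) → U(Q(n))^{⊗k}` is characterized on the generators
by `G 1 = ev` and the recursion coming from
`Δ_k(T^{(s)}_{i,j}) = Σ_t Σ_m (-1)^{(p(i)+p(m))(p(j)+p(m))} Δ_{k-1}(T^{(t)}_{i,m}) ⊗ T^{(s-t)}_{m,j}`;
`emb k a` is the embedding of `U(Q(n))` into the `a`-th tensor slot, `ishUp k` the
slot-raising embedding `U(Q(n))^{⊗k} → U(Q(n))^{⊗(k+1)}` and `σT` the parity involution. -/
theorem statement15 (n l : ℕ) (hn : 0 < n) (hl : 1 ≤ l) (p q : Fin n)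
    (r : ℕ) (hr : 1 ≤ r)
    (σT : TQ n l →ₐ[ℂ] TQ n l)
    (hσTx : ∀ (a : Fin l) (i j : Fin n), σT (xT a i j) = xT a i j)
    (hσTxi : ∀ (a : Fin l) (i j : Fin n), σT (xiT a i j) = -xiT a i j)
    (emb : ∀ k : ℕ, Fin k → (UQ n →ₐ[ℂ] TQ n k))
    (hembx : ∀ (k : ℕ) (a : Fin k) (i j : Fin n), emb k a (Ue i j) = xT a i j)
    (hembxi : ∀ (k : ℕ) (a : Fin k) (i j : Fin n), emb k a (Uf i j) = xiT a i j)
    (ishUp : ∀ k : ℕ, TQ n k →ₐ[ℂ] TQ n (k + 1))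
    (hishx : ∀ (k : ℕ) (a : Fin k) (i j : Fin n), ishUp k (xT a i j) = xT a.succ i j)
    (hishxi : ∀ (k : ℕ) (a : Fin k) (i j : Fin n), ishUp k (xiT a i j) = xiT a.succ i j)
    (G : ∀ k : ℕ, YQ n →ₐ[ℂ] TQ n k)
    (hG1 : ∀ (s : ℕ) (i j : QIdx n), G 1 (TY s i j) = emb 1 0 (evval s i j))
    (hGstep : ∀ (k : ℕ), 1 ≤ k → ∀ (s : ℕ) (i j : QIdx n),
      G (k + 1) (TY s i j) =
        ∑ t : Fin (s + 1), ∑ kk : QIdx n,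
          ((-1 : ℂ) ^ ((qpar i + qpar kk) * (qpar j + qpar kk))) •
            (ishUp k (G k (TY t.val i kk)) * emb (k + 1) 0 (evval (s - t.val) kk j))) :
    G l (TY r (false, q) (false, p)) =
      ((-1 : ℂ) ^ r) • ((2⁻¹ : ℂ) •
        (chainProdInc n l r p q + σT (chainProdInc n l r p q))) ∧
    G l (TY r (true, q) (false, p)) =
      ((-1 : ℂ) ^ r) • ((2⁻¹ : ℂ) •
        (chainProdInc n l r p q - σT (chainProdInc n l r p q))) := by
  obtain ⟨h1, h2⟩ := main_claim n emb hembx hembxi ishUp hishx hishxi G hG1 hGstep l hl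
  have hc : chainProdInc n l r p q = (-1 : ℂ) ^ r •
      (G l (TY r (false, q) (false, p)) + G l (TY r (true, q) (false, p))) := by
    rw [h2, smul_smul, ← mul_pow]
    simp
  have s1 := (h1 r false q p).sigma σT hσTx hσTxi
  have s2 := (h1 r true q p).sigma σT hσTx hσTxi
  have hs : ((-1 : ℂ) ^ r) * (-1) ^ r = 1 := by rw [← mul_pow]; simp
  rw [hc, map_smul, map_add, s1, s2]
  constructor
  · rw [← smul_add, smul_comm (2⁻¹ : ℂ), smul_smul, hs]
    simp only [if_true, Bool.false_eq_true, if_false]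
    module
  · rw [← tq_smul_sub, smul_comm (2⁻¹ : ℂ), smul_smul, hs]
    simp only [if_true, Bool.false_eq_true, if_false]
    module
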